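/- Let a, r, N, n be positive integers with 2rN < a and N | n, let z₀ ∈ {1, e^{iπ/N}} and p ∈ {0,1}, set d₀ = a(n/N + 1) − 2rn, and define s_{k,i} for 1 ≤ k ≤ d₀ − 1 and 1 ≤ i ≤ a+N by s_{k,i} = δ_n z₀^{k−1} P_{k,i}(z₀) for 1 ≤ i ≤ a and s_{k,a+1+λ} = δ_n (U_{k,λ}(z₀) + (−1)^p V_{k,N−λ}(z₀)) for 0 ≤ λ ≤ N−1 (with V_{k,N} = V_{k,0}). Then every s_{k,i} is a rational integer. -/

import Mathlib

noncomputable def Frat (a r N n : ℕ) (t : ℚ) : ℚ :=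
  ((n / N).factorial : ℚ) ^ (a - 2 * r * N) *
    (ascPochhammer ℚ (r * n)).eval (t - r * n) *
    (ascPochhammer ℚ (r * n)).eval (t + n + 1) /
    ∏ h ∈ Finset.range (n / N + 1), (t + N * h) ^ a

def IsPartialFractionCoeffs (a r N n : ℕ) (p : ℕ → ℕ → ℚ) : Prop :=
  ∀ t : ℚ, (∀ h ∈ Finset.range (n / N + 1), t + N * h ≠ 0) →
    Frat a r N n t =
      ∑ h ∈ Finset.range (n / N + 1), ∑ j ∈ Finset.Icc 1 a, p j h / (t + N * h) ^ j

/-- `P_j(z) = ∑_{h=0}^{n/N} p_{j,h} z^{Nh}` for `1 ≤ j ≤ a`, and `0` otherwise. -/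
noncomputable def Ppoly (a N n : ℕ) (p : ℕ → ℕ → ℚ) (j : ℕ) : Polynomial ℚ :=
  if 1 ≤ j ∧ j ≤ a then
    ∑ h ∈ Finset.range (n / N + 1), Polynomial.C (p j h) * Polynomial.X ^ (N * h)
  else 0

noncomputable def Upoly (a N n : ℕ) (p : ℕ → ℕ → ℚ) : Polynomial ℚ :=
  -∑ t ∈ Finset.Icc 1 n,
    Polynomial.C (∑ j ∈ Finset.Icc 1 a, ∑ h ∈ Finset.range ((t - 1) / N + 1),
      p j h / ((t : ℚ) - N * h) ^ j) * Polynomial.X ^ t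

noncomputable def Vpoly (a N n : ℕ) (p : ℕ → ℕ → ℚ) : Polynomial ℚ :=
  -∑ t ∈ Finset.range n,
    Polynomial.C (∑ j ∈ Finset.Icc 1 a, ∑ h ∈ Finset.Icc ((t + N) / N) (n / N),
      p j h / ((N * h : ℚ) - t) ^ j) * Polynomial.X ^ t

/-- Derivative of a rational function. -/
noncomputable def ratDeriv (f : RatFunc ℚ) : RatFunc ℚ :=
  RatFunc.mk (Polynomial.derivative f.num * f.denom - f.num * Polynomial.derivative f.denom)
    (f.denom ^ 2)

/-- `P_{k,j}` (with `k` shifted: `PPk k j = P_{k+1,j}`), defined by `P_{1,j} = P_j` and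
`P_{k,j} = P'_{k-1,j} - (1/z) P_{k-1,j+1}`, where `P_{k-1,a+1} = 0`. -/
noncomputable def PPk (a N n : ℕ) (p : ℕ → ℕ → ℚ) : ℕ → ℕ → RatFunc ℚ
  | 0, j => algebraMap (Polynomial ℚ) (RatFunc ℚ) (Ppoly a N n p j)
  | k + 1, j => ratDeriv (PPk a N n p k j) - (1 / RatFunc.X) * PPk a N n p k (j + 1)

/-- `U_k` (with `k` shifted: `UkF k = U_{k+1}`): `U₁ = U`, `U_k = U'_{k-1} - P_{k-1,1}/(1-z)`. -/
noncomputable def UkF (a N n : ℕ) (p : ℕ → ℕ → ℚ) : ℕ → RatFunc ℚ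
  | 0 => algebraMap (Polynomial ℚ) (RatFunc ℚ) (Upoly a N n p)
  | k + 1 => ratDeriv (UkF a N n p k) - (1 / (1 - RatFunc.X)) * PPk a N n p k 1

/-- `V_k` (with `k` shifted: `VkF k = V_{k+1}`): `V₁ = V`, `V_k = V'_{k-1} + P_{k-1,1}/(z(1-z))`. -/
noncomputable def VkF (a N n : ℕ) (p : ℕ → ℕ → ℚ) : ℕ → RatFunc ℚ
  | 0 => algebraMap (Polynomial ℚ) (RatFunc ℚ) (Vpoly a N n p)
  | k + 1 => ratDeriv (VkF a N n p k) + (1 / (RatFunc.X * (1 - RatFunc.X))) * PPk a N n p k 1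

/-- `d_m = lcm(1, 2, …, m)`. -/
def dlcm (m : ℕ) : ℕ := Finset.lcm (Finset.Icc 1 m) id

/-- `δ_n = (N d_n)^a N^{an/N}`. -/
def deltan (a N n : ℕ) : ℕ := (N * dlcm n) ^ a * N ^ (a * (n / N))

/-- `f ∈ ℚ[z^N, z^{-N}]`. -/
def InLaurentN (N : ℕ) (f : RatFunc ℚ) : Prop :=
  ∃ (s : Finset ℤ) (c : ℤ → ℚ), f = ∑ m ∈ s, RatFunc.C (c m) * RatFunc.X ^ ((N : ℤ) * m)

section RatPart
open Polynomial

/-- the canonical embedding of polynomials into rational functions -/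
local notation "ι" => algebraMap (Polynomial ℚ) (RatFunc ℚ)

lemma iota_ne {q : ℚ[X]} (hq : q ≠ 0) : ι q ≠ 0 :=
  RatFunc.algebraMap_ne_zero hq

lemma num_cross {f : RatFunc ℚ} {p q : ℚ[X]} (hq : q ≠ 0) (h : f = ι p / ι q) :
    f.num * q = p * f.denom := by
  have h1 := RatFunc.num_div_denom f
  have h2 : ι f.denom ≠ 0 := iota_ne f.denom_ne_zero
  have h3 := iota_ne hq
  have h1 := h1.trans h
  rw [div_eq_div_iff h2 h3] at h1
  rw [← map_mul, ← map_mul] at h1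
  exact RatFunc.algebraMap_injective ℚ h1

lemma deriv_cross (u d p q : ℚ[X]) (hc : u * q = p * d) :
    (derivative u * d - u * derivative d) * q ^ 2
      = (derivative p * q - p * derivative q) * d ^ 2 := by
  have hc' := congrArg derivative hc
  rw [derivative_mul, derivative_mul] at hc'
  linear_combination (d * q) * hc' - (d * derivative q + q * derivative d) * hc

lemma ratDeriv_div' (f : RatFunc ℚ) (p q : ℚ[X]) (hq : q ≠ 0) (hf : f = ι p / ι q) :
    ratDeriv f = ι (derivative p * q - p * derivative q) / ι (q ^ 2) := by
  have hc := num_cross hq hf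
  have hd : f.denom ≠ 0 := f.denom_ne_zero
  have key := deriv_cross _ _ _ _ hc
  unfold ratDeriv
  rw [RatFunc.mk_eq_div, div_eq_div_iff (iota_ne (pow_ne_zero 2 hd)) (iota_ne (pow_ne_zero 2 hq)),
    ← map_mul, ← map_mul, key]

lemma ratDeriv_div (p q : ℚ[X]) (hq : q ≠ 0) :
    ratDeriv (ι p / ι q) = ι (derivative p * q - p * derivative q) / ι (q ^ 2) :=
  ratDeriv_div' _ p q hq rfl

lemma eval_div_eq (f : RatFunc ℚ) (p q : ℚ[X]) (h : f = ι p / ι q) (z : ℂ)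
    (hz : q.eval₂ (algebraMap ℚ ℂ) z ≠ 0) :
    RatFunc.eval (algebraMap ℚ ℂ) z f
      = p.eval₂ (algebraMap ℚ ℂ) z / q.eval₂ (algebraMap ℚ ℂ) z := by
  have hq : q ≠ 0 := by rintro rfl; simp at hz
  have hc := num_cross hq h
  have hdv : f.denom ∣ q := by
    rw [h]; exact RatFunc.denom_div_dvd p q
  have hd : f.denom.eval₂ (algebraMap ℚ ℂ) z ≠ 0 := by
    intro h0
    exact hz (eval₂_eq_zero_of_dvd_of_eval₂_eq_zero _ _ hdv h0)
  unfold RatFunc.eval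
  rw [div_eq_div_iff hd hz, ← eval₂_mul, ← eval₂_mul, hc]

/-- image of an integer polynomial -/
noncomputable def im (A : ℤ[X]) : ℚ[X] := A.map (Int.castRingHom ℚ)

lemma im_mul (A B : ℤ[X]) : im (A * B) = im A * im B := by simp [im]
lemma im_add (A B : ℤ[X]) : im (A + B) = im A + im B := by simp [im]
lemma im_sub (A B : ℤ[X]) : im (A - B) = im A - im B := by simp [im]
lemma im_pow (A : ℤ[X]) (e : ℕ) : im (A ^ e) = im A ^ e := by simp [im]
lemma im_X : im X = X := by simp [im]
lemma im_der (A : ℤ[X]) : derivative (im A) = im (derivative A) := by simp [im, derivative_map]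

/-- `X (X - 1)` -/
noncomputable def qq : ℤ[X] := X * (X - 1)

lemma qq_monic : qq.Monic := by
  unfold qq
  exact monic_X.mul (monic_X_sub_C 1)

lemma im_qq_ne : im qq ≠ 0 := (qq_monic.map _).ne_zero

/-- rational functions with integral numerator (up to `δ`) over a power of `X(X-1)` -/
def Zset (δ : ℚ) (f : RatFunc ℚ) : Prop :=
  ∃ (A : ℤ[X]) (e : ℕ), f = ι (C δ⁻¹ * im A) / ι (im (qq ^ e))

lemma imqe (e : ℕ) : ι (im (qq ^ e)) ≠ 0 := iota_ne (by rw [im_pow]; exact pow_ne_zero _ im_qq_ne)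

lemma Zset.add {δ : ℚ} {f g : RatFunc ℚ} (hf : Zset δ f) (hg : Zset δ g) : Zset δ (f + g) := by
  obtain ⟨A, e, rfl⟩ := hf
  obtain ⟨B, e', rfl⟩ := hg
  refine ⟨A * qq ^ e' + B * qq ^ e, e + e', ?_⟩
  have h1 := imqe e
  have h2 := imqe e'
  rw [pow_add, im_mul, div_add_div _ _ h1 h2]
  simp only [im_add, im_mul, map_mul, map_add]
  ring

lemma Zset.mulA {δ : ℚ} {f : RatFunc ℚ} (hf : Zset δ f) (B : ℤ[X]) (e : ℕ) :
    Zset δ (ι (im B) / ι (im (qq ^ e)) * f) := by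
  obtain ⟨A, e', rfl⟩ := hf
  refine ⟨A * B, e + e', ?_⟩
  rw [pow_add]
  simp only [im_mul, map_mul]
  rw [div_mul_div_comm]
  ring

lemma Zset.deriv {δ : ℚ} {f : RatFunc ℚ} (hf : Zset δ f) : Zset δ (ratDeriv f) := by
  obtain ⟨A, e, rfl⟩ := hf
  refine ⟨derivative A * qq ^ e - A * derivative (qq ^ e), e * 2, ?_⟩
  rw [ratDeriv_div _ _ (by rw [im_pow]; exact pow_ne_zero _ im_qq_ne)]
  rw [pow_mul, im_pow (qq ^ e) 2, im_sub, im_mul, im_mul, ← im_der, ← im_der, derivative_C_mul]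
  congr 2
  ring

lemma iX : ι X = RatFunc.X := RatFunc.algebraMap_X
lemma iqq : ι (im qq) = RatFunc.X * (RatFunc.X - 1) := by
  simp [qq, im]

lemma X1ne : (RatFunc.X - 1 : RatFunc ℚ) ≠ 0 := by
  have := iota_ne (X_sub_C_ne_zero (1 : ℚ))
  simpa using this

lemma X1ne' : (1 - RatFunc.X : RatFunc ℚ) ≠ 0 := by
  intro h; apply X1ne; linear_combination -h

lemma invX_eq : -(1 / RatFunc.X : RatFunc ℚ) = ι (im (1 - X)) / ι (im (qq ^ 1)) := by
  rw [pow_one, iqq]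
  have h1 := X1ne
  have h2 := RatFunc.X_ne_zero (K := ℚ)
  simp only [im, Polynomial.map_sub, Polynomial.map_one, Polynomial.map_X, map_sub, map_one, iX]
  field_simp
  ring

lemma inv1X_eq : -(1 / (1 - RatFunc.X) : RatFunc ℚ) = ι (im X) / ι (im (qq ^ 1)) := by
  rw [pow_one, iqq]
  have h1 := X1ne
  have h2 := RatFunc.X_ne_zero (K := ℚ)
  have h3 := X1ne'
  simp only [im, Polynomial.map_X, iX]
  field_simp
  ring

lemma invX1X_eq : (1 / (RatFunc.X * (1 - RatFunc.X)) : RatFunc ℚ)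
    = ι (im (-1)) / ι (im (qq ^ 1)) := by
  rw [pow_one, iqq]
  have h1 := X1ne
  have h2 := RatFunc.X_ne_zero (K := ℚ)
  have h3 := X1ne'
  simp only [im, Polynomial.map_neg, Polynomial.map_one, map_neg, map_one]
  field_simp
  ring

lemma Zset.of_poly {δ : ℚ} {A : ℤ[X]} {P : ℚ[X]} (h : P = C δ⁻¹ * im A) : Zset δ (ι P) :=
  ⟨A, 0, by simp [h, im]⟩

lemma PPk_Z {a N n : ℕ} {p : ℕ → ℕ → ℚ} {δ : ℚ}
    (h0 : ∀ j, ∃ B : ℤ[X], Ppoly a N n p j = C δ⁻¹ * im (expand ℤ N B)) (k j : ℕ) :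
    Zset δ (PPk a N n p k j) := by
  induction k generalizing j with
  | zero => obtain ⟨B, hB⟩ := h0 j; exact Zset.of_poly hB
  | succ k ih =>
    rw [PPk, sub_eq_add_neg, ← neg_mul, invX_eq]
    exact (ih j).deriv.add ((ih (j + 1)).mulA _ _)

lemma UkF_Z {a N n : ℕ} {p : ℕ → ℕ → ℚ} {δ : ℚ}
    (h0 : ∀ j, ∃ B : ℤ[X], Ppoly a N n p j = C δ⁻¹ * im (expand ℤ N B))
    (hU : ∃ B : ℤ[X], Upoly a N n p = C δ⁻¹ * im B) (k : ℕ) :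
    Zset δ (UkF a N n p k) := by
  induction k with
  | zero => obtain ⟨B, hB⟩ := hU; exact Zset.of_poly hB
  | succ k ih =>
    rw [UkF, sub_eq_add_neg, ← neg_mul, inv1X_eq]
    exact ih.deriv.add ((PPk_Z h0 k 1).mulA _ _)

lemma VkF_Z {a N n : ℕ} {p : ℕ → ℕ → ℚ} {δ : ℚ}
    (h0 : ∀ j, ∃ B : ℤ[X], Ppoly a N n p j = C δ⁻¹ * im (expand ℤ N B))
    (hV : ∃ B : ℤ[X], Vpoly a N n p = C δ⁻¹ * im B) (k : ℕ) :
    Zset δ (VkF a N n p k) := by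
  induction k with
  | zero => obtain ⟨B, hB⟩ := hV; exact Zset.of_poly hB
  | succ k ih =>
    rw [VkF, invX1X_eq]
    exact ih.deriv.add ((PPk_Z h0 k 1).mulA _ _)

lemma PPk_form {a N n : ℕ} (hN : 0 < N) {p : ℕ → ℕ → ℚ} {δ : ℚ}
    (h0 : ∀ j, ∃ B : ℤ[X], Ppoly a N n p j = C δ⁻¹ * im (expand ℤ N B)) (k j : ℕ) :
    ∃ B : ℤ[X], PPk a N n p k j = ι (C δ⁻¹ * im (expand ℤ N B)) / ι (X ^ k) := by
  induction k generalizing j with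
  | zero => obtain ⟨B, hB⟩ := h0 j; exact ⟨B, by simp [PPk, hB]⟩
  | succ k ih =>
    obtain ⟨B, hB⟩ := ih j
    obtain ⟨B', hB'⟩ := ih (j + 1)
    refine ⟨C (N : ℤ) * X * derivative B - C (k : ℤ) * B - B', ?_⟩
    have hX : (X : ℚ[X]) ^ k ≠ 0 := pow_ne_zero _ X_ne_zero
    have hX' : RatFunc.X (K := ℚ) ≠ 0 := RatFunc.X_ne_zero
    have e1 : X * derivative (C δ⁻¹ * im (expand ℤ N B))
        = C δ⁻¹ * im (expand ℤ N (C (N : ℤ) * X * derivative B)) := by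
      rw [derivative_C_mul, im_der, derivative_expand]
      have : (X : ℚ[X]) ^ N = X * X ^ (N - 1) := by rw [← pow_succ']; congr 1; omega
      simp only [im, Polynomial.map_mul, Polynomial.map_pow, Polynomial.map_natCast,
        Polynomial.map_X, map_mul, expand_C, expand_X, Polynomial.map_C, this]
      simp
      ring
    have e2 : X * derivative ((X : ℚ[X]) ^ k) = C (k : ℚ) * X ^ k := by
      rcases k with _ | k
      · simp
      · rw [derivative_X_pow, Nat.add_sub_cancel, pow_succ]; ring
    rw [PPk, hB, hB', ratDeriv_div _ _ hX]
    set E := C δ⁻¹ * im (expand ℤ N B)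
    set E' := C δ⁻¹ * im (expand ℤ N B')
    have e3 : C δ⁻¹ * im (expand ℤ N (C (N : ℤ) * X * derivative B - C (k : ℤ) * B - B'))
        = X * derivative E - C (k : ℚ) * E - E' := by
      rw [e1]
      simp only [E, E', map_sub, im_sub, mul_sub, map_mul, im_mul]
      simp [im]
      ring
    rw [e3]
    have e4 : (derivative E * X ^ k - E * derivative (X ^ k)) * X
        = (X * derivative E - C (k : ℚ) * E) * X ^ k := by
      linear_combination (-E) * e2
    have e6 : ι (derivative E * X ^ k - E * derivative (X ^ k)) / ι ((X ^ k) ^ 2)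
        = ι (X * derivative E - C (k : ℚ) * E) / ι (X ^ (k + 1)) := by
      rw [div_eq_div_iff (iota_ne (pow_ne_zero _ hX)) (iota_ne (pow_ne_zero _ X_ne_zero)),
        ← map_mul, ← map_mul]
      congr 1
      linear_combination X ^ k * e4
    rw [e6, map_sub ι (X * derivative E - C (k : ℚ) * E) E', sub_div, pow_succ, map_mul ι (X ^ k) X, iX,
      one_div_mul_eq_div, div_div]

lemma laurent_eventually {N : ℕ} {f : RatFunc ℚ} (hf : InLaurentN N f) :
    ∀ᶠ M : ℕ in Filter.atTop, ∃ g : ℚ[X], f * ι (X ^ (N * M)) = ι (expand ℚ N g) := by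
  obtain ⟨s, c, rfl⟩ := hf
  have h : ∀ m ∈ s, ∀ᶠ M : ℕ in Filter.atTop, ∃ g : ℚ[X],
      RatFunc.C (c m) * RatFunc.X ^ ((N : ℤ) * m) * ι (X ^ (N * M)) = ι (expand ℚ N g) := by
    intro m _
    filter_upwards [Filter.eventually_ge_atTop m.natAbs] with M hM
    refine ⟨C (c m) * X ^ (m + M).toNat, ?_⟩
    have h1 : ((m + M).toNat : ℤ) = m + M := Int.toNat_of_nonneg (by omega)
    simp only [map_mul, map_pow, expand_C, expand_X, iX, RatFunc.algebraMap_C]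
    rw [mul_assoc]
    congr 1
    rw [← pow_mul, ← zpow_natCast, ← zpow_natCast, ← zpow_add₀ RatFunc.X_ne_zero]
    congr 1
    push_cast
    rw [h1]; ring
  have h2 := (Filter.eventually_all_finset s).2 h
  filter_upwards [h2] with M hM
  choose! g hg using hM
  refine ⟨∑ m ∈ s, g m, ?_⟩
  rw [Finset.sum_mul, map_sum, map_sum]
  exact Finset.sum_congr rfl hg

lemma im_of_mul {H : ℚ[X]} {Q A : ℤ[X]} (hQ : Q.Monic) (h : im Q * H = im A) :
    ∃ B : ℤ[X], H = im B := by
  refine ⟨A /ₘ Q, ?_⟩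
  unfold im at *
  rw [map_divByMonic _ hQ, ← h, mul_divByMonic_cancel_left _ (hQ.map _)]

lemma im_of_coeff {H : ℚ[X]} (h : ∀ i, ∃ b : ℤ, H.coeff i = b) : ∃ B : ℤ[X], H = im B := by
  choose b hb using h
  refine ⟨∑ i ∈ H.support, C (b i) * X ^ i, ?_⟩
  conv_lhs => rw [H.as_sum_support_C_mul_X_pow]
  unfold im
  rw [Polynomial.map_sum]
  refine Finset.sum_congr rfl fun i _ => ?_
  simp [hb]

lemma coeff_im (B : ℤ[X]) (i : ℕ) : (im B).coeff i = B.coeff i := by simp [im]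

lemma coeff_comp {N : ℕ} (hN : 0 < N) (g : ℕ → ℚ[X]) {l : ℕ} (hl : l < N) (i : ℕ) :
    (∑ l' ∈ Finset.range N, X ^ l' * expand ℚ N (g l')).coeff (i * N + l) = (g l).coeff i := by
  rw [finsetSum_coeff, Finset.sum_eq_single l]
  · rw [coeff_X_pow_mul, coeff_expand_mul hN]
  · intro l' hl' hne
    rw [coeff_X_pow_mul']
    split_ifs with hle
    · rw [coeff_expand hN, if_neg]
      intro hdv
      have hl'' := Finset.mem_range.1 hl'
      apply hne
      have h3 : i * N + l ≡ l' [MOD N] := ((Nat.modEq_iff_dvd' hle).2 hdv).symm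
      have h4 : i * N + l ≡ l [MOD N] := by simp [Nat.ModEq]
      exact Nat.ModEq.eq_of_lt_of_lt (h3.symm.trans h4) hl'' hl
    · rfl
  · intro h; exact absurd (Finset.mem_range.2 hl) h

lemma comps {N : ℕ} (hN : 0 < N) {δ : ℚ} (hδ : δ ≠ 0) {f : RatFunc ℚ} (hZ : Zset δ f)
    (W : ℕ → RatFunc ℚ) (k : ℕ)
    (h : RatFunc.X ^ k * f = ∑ l ∈ Finset.range N, RatFunc.X ^ l * W l)
    (hL : ∀ l ∈ Finset.range N, InLaurentN N (W l)) :
    ∃ M : ℕ, ∀ l ∈ Finset.range N, ∃ B : ℤ[X],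
      W l = ι (C δ⁻¹ * im (expand ℤ N B)) / ι (X ^ (N * M)) := by
  have h1 := (Filter.eventually_all_finset _).2 fun l hl => laurent_eventually (hL l hl)
  obtain ⟨M, hM⟩ := h1.exists
  choose! g hg using hM
  obtain ⟨A, e, hf⟩ := hZ
  refine ⟨M, ?_⟩
  have hG : RatFunc.X ^ k * f * ι (X ^ (N * M))
      = ι (∑ l ∈ Finset.range N, X ^ l * expand ℚ N (g l)) := by
    rw [h, Finset.sum_mul, map_sum]
    refine Finset.sum_congr rfl fun l hl => ?_
    rw [mul_assoc, hg l hl, map_mul, map_pow, iX]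
  set G := ∑ l ∈ Finset.range N, X ^ l * expand ℚ N (g l) with hGdef
  have hmul : im (qq ^ e) * (C δ * G) = im (X ^ k * A * X ^ (N * M)) := by
    apply RatFunc.algebraMap_injective ℚ
    rw [map_mul, map_mul, ← hG, hf, im_mul, im_mul, im_pow, im_pow X k,
      im_pow X (N * M), im_X]
    have h3 := imqe e
    rw [im_pow] at h3
    have h4 : ι (C δ) * ι (C δ⁻¹) = 1 := by
      rw [← map_mul, ← C_mul, mul_inv_cancel₀ hδ]; simp
    simp only [map_mul, map_pow, iX] at h3 ⊢
    generalize ι (C δ⁻¹) = d at h4 ⊢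
    field_simp
    linear_combination (RatFunc.X ^ k * ι (im A) * (RatFunc.X ^ (N * M))) * h4
  obtain ⟨B, hB⟩ := im_of_mul (qq_monic.pow e) hmul
  intro l hl
  have hl' := Finset.mem_range.1 hl
  obtain ⟨b, hb⟩ : ∃ b : ℤ[X], C δ * g l = im b := by
    apply im_of_coeff
    intro i
    refine ⟨B.coeff (i * N + l), ?_⟩
    rw [← coeff_im, ← hB, coeff_C_mul, coeff_C_mul, hGdef, coeff_comp hN g hl']
  refine ⟨b, ?_⟩
  have h5 : C δ⁻¹ * im (expand ℤ N b) = expand ℚ N (g l) := by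
    have : im (expand ℤ N b) = expand ℚ N (im b) := by unfold im; rw [map_expand]
    rw [this, ← hb, map_mul, expand_C, ← mul_assoc, ← C_mul, inv_mul_cancel₀ hδ]
    simp
  rw [h5, ← hg l hl, mul_div_cancel_right₀]
  exact iota_ne (pow_ne_zero _ X_ne_zero)

lemma eval_int {N : ℕ} {δ : ℚ} (hδ : δ ≠ 0) {f : RatFunc ℚ} {B : ℤ[X]} {e : ℕ}
    (hf : f = ι (C δ⁻¹ * im (expand ℤ N B)) / ι (X ^ e)) {z : ℂ} {ε : ℤ} (hz0 : z ≠ 0)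
    (hz : z ^ N = ε) :
    (δ : ℂ) * z ^ e * RatFunc.eval (algebraMap ℚ ℂ) z f = ((B.eval ε : ℤ) : ℂ) := by
  rw [eval_div_eq f _ _ hf z (by simp [hz0])]
  have h1 : (im (expand ℤ N B)).eval₂ (algebraMap ℚ ℂ) z = ((B.eval ε : ℤ) : ℂ) := by
    unfold im
    rw [eval₂_map]
    have : (algebraMap ℚ ℂ).comp (Int.castRingHom ℚ) = algebraMap ℤ ℂ := RingHom.ext_int _ _
    rw [this, ← aeval_def, expand_aeval, hz]
    simp [aeval_def, eval₂_at_intCast]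
  rw [eval₂_mul, h1]
  have h2 : (δ : ℂ) ≠ 0 := by exact_mod_cast hδ
  simp
  field_simp

lemma eval_int' {N : ℕ} {δ : ℚ} (hδ : δ ≠ 0) {f : RatFunc ℚ} {B : ℤ[X]} {M : ℕ}
    (hf : f = ι (C δ⁻¹ * im (expand ℤ N B)) / ι (X ^ (N * M))) {z : ℂ} {ε : ℤ} (hz0 : z ≠ 0)
    (hz : z ^ N = ε) (hε : ε * ε = 1) :
    ∃ m : ℤ, (δ : ℂ) * RatFunc.eval (algebraMap ℚ ℂ) z f = m := by
  have h := eval_int hδ hf hz0 hz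
  refine ⟨ε ^ M * B.eval ε, ?_⟩
  rw [pow_mul, hz] at h
  push_cast
  rw [← h]
  have h2 : (ε : ℂ) ^ M * (ε : ℂ) ^ M = 1 := by
    rw [← mul_pow]; have : (ε : ℂ) * ε = 1 := by exact_mod_cast hε
    rw [this, one_pow]
  linear_combination (-(δ : ℂ) * RatFunc.eval (algebraMap ℚ ℂ) z f) * h2

end RatPart

section ArithPart
open Finset

/-- span of the powers `x_h^j`, `1 ≤ j ≤ s`, `h ≤ m` -/
def Msub {R : Type*} [CommRing R] (x : ℕ → R) (m s : ℕ) : Submodule ℤ R :=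
  Submodule.span ℤ {y | ∃ h ∈ range (m + 1), ∃ j ∈ Icc 1 s, y = x h ^ j}

section
variable {R : Type*} [CommRing R] {x : ℕ → R} {m : ℕ}

lemma Msub_mem {h j s : ℕ} (hh : h ∈ range (m + 1)) (hj : j ∈ Icc 1 s) : x h ^ j ∈ Msub x m s :=
  Submodule.subset_span ⟨h, hh, j, hj, rfl⟩

lemma Msub_mono {s s' : ℕ} (hs : s ≤ s') : Msub x m s ≤ Msub x m s' := by
  apply Submodule.span_mono
  rintro y ⟨h, hh, j, hj, rfl⟩
  rw [mem_Icc] at hj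
  exact ⟨h, hh, j, mem_Icc.2 ⟨hj.1, hj.2.trans hs⟩, rfl⟩

lemma Msub_pow_mul (hx : ∀ h ∈ range (m + 1), ∀ h' ∈ range (m + 1), h ≠ h' →
      ∃ c : ℤ, x h * x h' = c • (x h - x h')) {h h' : ℕ} (hh : h ∈ range (m + 1))
    (hh' : h' ∈ range (m + 1)) (j : ℕ) : x h ^ j * x h' ∈ Msub x m (j + 1) := by
  by_cases he : h = h'
  · subst he
    rw [← pow_succ]
    exact Msub_mem hh (by simp)
  obtain ⟨c, hc⟩ := hx h hh h' hh' he
  induction j with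
  | zero =>
    rw [pow_zero, one_mul, ← pow_one (x h')]
    exact Msub_mem hh' (by simp)
  | succ j ih =>
    have e : x h ^ (j + 1) * x h' = c • (x h ^ (j + 1) - x h ^ j * x h') := by
      rw [pow_succ, mul_assoc, hc, mul_smul_comm, mul_sub]
    rw [e]
    apply Submodule.smul_mem
    apply Submodule.sub_mem
    · exact Msub_mem hh (by simp)
    · exact Msub_mono (by omega) ih

lemma Msub_mul (hx : ∀ h ∈ range (m + 1), ∀ h' ∈ range (m + 1), h ≠ h' →
      ∃ c : ℤ, x h * x h' = c • (x h - x h')) {s : ℕ} {u v : R} (hu : u ∈ Msub x m s)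
    (hv : v ∈ Msub x m 1) : u * v ∈ Msub x m (s + 1) := by
  unfold Msub at hu hv
  induction hu using Submodule.span_induction with
  | mem u hu =>
    obtain ⟨h, hh, j, hj, rfl⟩ := hu
    induction hv using Submodule.span_induction with
    | mem v hv =>
      obtain ⟨h', hh', j', hj', rfl⟩ := hv
      rw [mem_Icc] at hj hj'
      have : j' = 1 := by omega
      subst this
      rw [pow_one]
      exact Msub_mono (by omega) (Msub_pow_mul hx hh hh' j)
    | zero => rw [mul_zero]; exact Submodule.zero_mem _
    | add v w _ _ h1 h2 => rw [mul_add]; exact Submodule.add_mem _ h1 h2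
    | smul c v _ h1 => rw [mul_smul_comm]; exact Submodule.smul_mem _ _ h1
  | zero => rw [zero_mul]; exact Submodule.zero_mem _
  | add v w _ _ h1 h2 => rw [add_mul]; exact Submodule.add_mem _ h1 h2
  | smul c v _ h1 => rw [smul_mul_assoc]; exact Submodule.smul_mem _ _ h1

lemma Msub_prod (hx : ∀ h ∈ range (m + 1), ∀ h' ∈ range (m + 1), h ≠ h' →
      ∃ c : ℤ, x h * x h' = c • (x h - x h')) {s : ℕ} {u : R} (hu : u ∈ Msub x m s)
    (f : ℕ → R) (hf : ∀ i, f i ∈ Msub x m 1) (b : ℕ) :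
    u * ∏ i ∈ range b, f i ∈ Msub x m (s + b) := by
  induction b with
  | zero => simpa using hu
  | succ b ih =>
    rw [prod_range_succ, ← mul_assoc]
    exact Msub_mul hx ih (hf b)

lemma Msub_repr {s : ℕ} {u : R} (hu : u ∈ Msub x m s) :
    ∃ c : ℕ → ℕ → ℤ, u = ∑ h ∈ range (m + 1), ∑ j ∈ Icc 1 s, c j h • x h ^ j := by
  unfold Msub at hu
  induction hu using Submodule.span_induction with
  | mem u hu =>
    obtain ⟨h, hh, j, hj, rfl⟩ := hu
    refine ⟨fun j' h' => if h' = h then (if j' = j then 1 else 0) else 0, ?_⟩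
    rw [sum_eq_single h, sum_eq_single j]
    · simp
    · intro j' _ hne; simp [hne]
    · intro hne; exact absurd hj hne
    · intro h' _ hne; simp [hne]
    · intro hne; exact absurd hh hne
  | zero => exact ⟨fun _ _ => 0, by simp⟩
  | add v w _ _ h1 h2 =>
    obtain ⟨c, rfl⟩ := h1
    obtain ⟨d, rfl⟩ := h2
    refine ⟨fun j h => c j h + d j h, ?_⟩
    simp only [add_smul, sum_add_distrib]
  | smul a v _ h1 =>
    obtain ⟨c, rfl⟩ := h1
    refine ⟨fun j h => a * c j h, ?_⟩
    simp only [smul_sum, mul_smul]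
end

lemma prod_diff (h d : ℕ) :
    ∏ j ∈ (range (h + d + 1)).erase h, ((j : ℚ) - h) = (-1) ^ h * h.factorial * d.factorial := by
  induction d with
  | zero =>
    have : (range (h + 0 + 1)).erase h = range h := by
      ext i; simp; omega
    rw [this]
    have h2 : ∏ j ∈ range h, ((j : ℚ) - h) = ∏ j ∈ range h, (-1) * ((j : ℚ) + 1) := by
      rw [← prod_range_reflect]
      refine prod_congr rfl fun j hj => ?_
      have := mem_range.1 hj
      have e : ((h - 1 - j : ℕ) : ℚ) = h - 1 - j := by
        rw [Nat.cast_sub (by omega), Nat.cast_sub (by omega)]; simp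
      rw [e]; ring
    rw [h2, prod_mul_distrib, prod_const, card_range, ← prod_range_add_one_eq_factorial]
    push_cast
    simp
  | succ d ih =>
    have : (range (h + (d + 1) + 1)).erase h = insert (h + d + 1) ((range (h + d + 1)).erase h) := by
      ext i; simp; omega
    rw [this, prod_insert (by simp), ih, Nat.factorial_succ]
    push_cast
    ring

lemma asc_dvd (c : ℤ) (m : ℕ) :
    ∃ b : ℤ, (ascPochhammer ℚ m).eval (c : ℚ) = b * m.factorial := by
  refine ⟨Ring.multichoose c m, ?_⟩
  have h := Ring.factorial_nsmul_multichoose_eq_ascPochhammer c m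
  rw [Polynomial.ascPochhammer_smeval_eq_eval] at h
  have h2 := congrArg (Int.cast : ℤ → ℚ) h
  have h3 : (ascPochhammer ℚ m).eval (c : ℚ) = (((ascPochhammer ℤ m).eval c : ℤ) : ℚ) := by
    rw [← ascPochhammer_map (Int.castRingHom ℚ), Polynomial.eval_intCast_map]
    simp
  rw [h3, ← h2, nsmul_eq_mul]
  push_cast
  ring

lemma asc_split (m b : ℕ) (y : ℚ) : (ascPochhammer ℚ (b * m)).eval y
    = ∏ i ∈ range b, (ascPochhammer ℚ m).eval (y + i * m) := by
  induction b with
  | zero => simp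
  | succ b ih =>
    rw [prod_range_succ, ← ih, Nat.succ_mul, ← ascPochhammer_mul]
    simp

/-- the domain of the partial fraction expansion -/
abbrev Sdom (N m : ℕ) := {t : ℚ // ∀ h ∈ range (m + 1), t + N * h ≠ 0}

/-- basic functions -/
def xf (N m D : ℕ) (h : ℕ) : Sdom N m → ℚ := fun t => (D * N : ℚ) / (t.1 + N * h)

lemma xf_mul {N m D : ℕ} (hD : ∀ k ∈ Icc 1 m, k ∣ D) : ∀ h ∈ range (m + 1), ∀ h' ∈ range (m + 1),
    h ≠ h' → ∃ c : ℤ, xf N m D h * xf N m D h' = c • (xf N m D h - xf N m D h') := by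
  intro h hh h' hh' hne
  have hdv : ((h' : ℤ) - h) ∣ (D : ℤ) := by
    rw [mem_range] at hh hh'
    have := hD ((h' : ℤ) - h).natAbs (mem_Icc.2 ⟨by omega, by omega⟩)
    exact Int.natAbs_dvd.1 (Int.natCast_dvd_natCast.2 this)
  obtain ⟨c, hc⟩ := hdv
  refine ⟨c, ?_⟩
  funext t
  have h1 := t.2 h hh
  have h2 := t.2 h' hh'
  have hc' : (D : ℚ) = (h' - h) * c := by exact_mod_cast hc
  simp only [xf, Pi.mul_apply, Pi.smul_apply, Pi.sub_apply, zsmul_eq_mul]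
  rw [div_sub_div _ _ h1 h2, div_mul_div_comm, mul_div_assoc']
  congr 1
  rw [hc']
  ring

lemma factor_mem {N m D : ℕ} (hN : 0 < N) (Q : Polynomial ℚ) (hQ : Q.degree < (m + 1 : ℕ))
    (hv : ∀ h ∈ range (m + 1), ∃ b : ℤ, Q.eval (-(N * h : ℚ)) = b * m.factorial) :
    (fun t : Sdom N m => (D : ℚ) * N ^ (m + 1) * Q.eval t.1 / ∏ h ∈ range (m + 1), (t.1 + N * h))
      ∈ Msub (xf N m D) m 1 := by
  choose! b hb using hv
  have hN' : (N : ℚ) ≠ 0 := by exact_mod_cast hN.ne'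
  set v : ℕ → ℚ := fun h => -(N * h : ℚ) with hvdef
  have hinj : Set.InjOn v (range (m + 1)) := by
    intro i _ j _ hij
    simp only [hvdef, neg_inj] at hij
    exact_mod_cast mul_left_cancel₀ hN' hij
  have hL := Lagrange.eq_interpolate hinj (f := Q) (by simpa using hQ)
  have hw : ∀ h ∈ range (m + 1), ∃ c : ℤ,
      (N : ℚ) ^ m * Lagrange.nodalWeight (range (m + 1)) v h * Q.eval (v h) = c := by
    intro h hh
    have hh' := mem_range.1 hh
    obtain ⟨d, rfl⟩ : ∃ d, m = h + d := ⟨m - h, by omega⟩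
    obtain ⟨k, hk⟩ := Nat.factorial_mul_factorial_dvd_factorial_add h d
    refine ⟨b h * ((-1) ^ h * k), ?_⟩
    have e1 : Lagrange.nodalWeight (range (h + d + 1)) v h
        = ((N : ℚ) ^ (h + d) * ((-1) ^ h * h.factorial * d.factorial))⁻¹ := by
      rw [Lagrange.nodalWeight, prod_inv_distrib, ← prod_diff]
      congr 1
      have : ∀ j ∈ (range (h + d + 1)).erase h, v h - v j = N * ((j : ℚ) - h) := by
        intro j _; simp only [hvdef]; ring
      rw [prod_congr rfl this, prod_mul_distrib, prod_const, card_erase_of_mem hh, card_range]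
      simp
    rw [e1, hvdef]
    simp only
    rw [hb h hh, hk]
    have f1 : (h.factorial : ℚ) ≠ 0 := by exact_mod_cast h.factorial_ne_zero
    have f2 : (d.factorial : ℚ) ≠ 0 := by exact_mod_cast d.factorial_ne_zero
    have f3 : ((-1 : ℚ) ^ h) * (-1) ^ h = 1 := by rw [← mul_pow]; simp
    push_cast
    rw [mul_inv, mul_inv, mul_inv]
    have f4 : ((-1 : ℚ) ^ h)⁻¹ = (-1) ^ h := by rw [← inv_pow]; norm_num
    rw [f4]
    field_simp
  choose! c hc using hw
  have key : (fun t : Sdom N m => (D : ℚ) * N ^ (m + 1) * Q.eval t.1 /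
      ∏ h ∈ range (m + 1), (t.1 + N * h)) = ∑ h ∈ range (m + 1), c h • xf N m D h ^ 1 := by
    funext t
    have hne : ∀ i ∈ range (m + 1), t.1 ≠ v i := by
      intro i hi h0
      apply t.2 i hi
      rw [h0]; simp [hvdef]
    have hE := Lagrange.eval_interpolate_not_at_node (fun i => Q.eval (v i)) hne
    rw [← hL, Lagrange.eval_nodal] at hE
    have hP : ∏ i ∈ range (m + 1), (t.1 - v i) = ∏ h ∈ range (m + 1), (t.1 + N * h) :=
      prod_congr rfl fun i _ => by simp [hvdef]
    rw [hP] at hE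
    have hP0 : ∏ h ∈ range (m + 1), (t.1 + N * h) ≠ 0 := prod_ne_zero_iff.2 t.2
    rw [hE, mul_left_comm, mul_div_cancel_left₀ _ hP0, mul_sum, Finset.sum_apply]
    refine sum_congr rfl fun h hh => ?_
    simp only [Pi.smul_apply, pow_one, zsmul_eq_mul, xf]
    rw [← hc h hh]
    have := t.2 h hh
    have e : t.1 - v h = t.1 + N * h := by simp [hvdef]
    rw [e]
    field_simp
    ring
  rw [key]
  exact Submodule.sum_mem _ fun h hh => Submodule.smul_mem _ _ (Msub_mem hh (by simp))

lemma Frat_mem {a r N n D : ℕ} (hN : 0 < N) (hra : 2 * r * N < a) (hNn : N ∣ n)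
    (hD : ∀ k ∈ Icc 1 (n / N), k ∣ D) :
    (fun t : Sdom N (n / N) => (D : ℚ) ^ a * N ^ (a * (n / N + 1)) * Frat a r N n t.1)
      ∈ Msub (xf N (n / N) D) (n / N) a := by
  obtain ⟨m, rfl⟩ := hNn
  rw [Nat.mul_div_cancel_left m hN] at *
  have hx := xf_mul (N := N) hD
  set f1 : Sdom N m → ℚ := fun t =>
    (D : ℚ) * N ^ (m + 1) * (m.factorial : ℚ) / ∏ h ∈ range (m + 1), (t.1 + N * h) with hf1
  have m1 : f1 ∈ Msub (xf N m D) m 1 := by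
    have := factor_mem (D := D) hN (Polynomial.C (m.factorial : ℚ))
      (lt_of_le_of_lt Polynomial.degree_C_le (by exact_mod_cast Nat.succ_pos m))
      (fun h _ => ⟨1, by simp⟩)
    simpa using this
  set g : ℤ → Sdom N m → ℚ := fun c t => (D : ℚ) * N ^ (m + 1) *
    (ascPochhammer ℚ m).eval (t.1 + c) / ∏ h ∈ range (m + 1), (t.1 + N * h) with hg
  have m2 : ∀ c, g c ∈ Msub (xf N m D) m 1 := by
    intro c
    have := factor_mem (D := D) hN ((ascPochhammer ℚ m).comp (Polynomial.X + Polynomial.C (c : ℚ)))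
      (by
        refine lt_of_le_of_lt Polynomial.degree_le_natDegree ?_
        rw [Polynomial.natDegree_comp, Polynomial.natDegree_X_add_C, ascPochhammer_natDegree]
        exact_mod_cast (by omega : m * 1 < m + 1))
      (fun h _ => by
        obtain ⟨b, hb⟩ := asc_dvd (-(N * h) + c) m
        refine ⟨b, ?_⟩
        rw [← hb]
        simp)
    simpa using this
  have step1 := Msub_prod hx m1 (fun _ => f1) (fun _ => m1) (a - 2 * r * N - 1)
  have step2 := Msub_prod hx step1 (fun i => g (-(r * N * m : ℤ) + i * m)) (fun _ => m2 _) (r * N)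
  have step3 := Msub_prod hx step2 (fun i => g ((N * m + 1 : ℤ) + i * m)) (fun _ => m2 _) (r * N)
  have ea : 1 + (a - 2 * r * N - 1) + r * N + r * N = a := by
    have : 2 * r * N = r * N + r * N := by ring
    omega
  rw [ea] at step3
  convert step3 using 1
  funext t
  have hP0 : ∏ h ∈ range (m + 1), (t.1 + N * h) ≠ 0 := prod_ne_zero_iff.2 t.2
  simp only [Frat, Nat.mul_div_cancel_left m hN, Pi.mul_apply, Finset.prod_apply, hf1, hg,
    prod_const, card_range, Pi.pow_apply, prod_pow]
  have e1 : r * (N * m) = r * N * m := by ring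
  rw [e1, asc_split, asc_split]
  simp only [prod_div_distrib, prod_mul_distrib, prod_const, card_range]
  obtain ⟨b, hb⟩ : ∃ b, a = 1 + b + r * N + r * N := ⟨_, ea.symm⟩
  have hb1 : a - 2 * r * N = b + 1 := by
    have : 2 * r * N = r * N + r * N := by ring
    omega
  have hb2 : b + 1 - 1 = b := rfl
  rw [hb1, hb2, hb]
  have p1 : ∏ i ∈ range (r * N), (ascPochhammer ℚ m).eval (t.1 - r * (N * m : ℕ) + i * m)
      = ∏ i ∈ range (r * N), (ascPochhammer ℚ m).eval (t.1 + ((-(r * N * m : ℤ) + i * m : ℤ) : ℚ)) :=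
    prod_congr rfl fun i _ => by congr 1; push_cast; ring
  have p2 : ∏ i ∈ range (r * N), (ascPochhammer ℚ m).eval (t.1 + (N * m : ℕ) + 1 + i * m)
      = ∏ i ∈ range (r * N), (ascPochhammer ℚ m).eval (t.1 + (((N * m + 1 : ℤ) + i * m : ℤ) : ℚ)) :=
    prod_congr rfl fun i _ => by congr 1; push_cast; ring
  rw [p1, p2]
  generalize ∏ i ∈ range (r * N), (ascPochhammer ℚ m).eval (t.1 + ((-(r * N * m : ℤ) + i * m : ℤ) : ℚ))
    = A
  generalize ∏ i ∈ range (r * N), (ascPochhammer ℚ m).eval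
    (t.1 + (((N * m + 1 : ℤ) + i * m : ℤ) : ℚ)) = B
  generalize ∏ h ∈ range (m + 1), (t.1 + N * h) = P at *
  generalize r * N = w
  simp only [div_eq_mul_inv]
  ring


lemma pf_unique {N m a : ℕ} (hN : 0 < N) (q : ℕ → ℕ → ℚ)
    (h : ∀ t : Sdom N m, ∑ h ∈ range (m + 1), ∑ j ∈ Icc 1 a, q j h / (t.1 + N * h) ^ j = 0) :
    ∀ h0 ∈ range (m + 1), ∀ j ∈ Icc 1 a, q j h0 = 0 := by
  intro h0 hh0
  have hN' : (N : ℚ) ≠ 0 := by exact_mod_cast hN.ne'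
  let L : ℕ → Polynomial ℚ := fun i => Polynomial.X + Polynomial.C (N * i : ℚ)
  let T : ℕ → Polynomial ℚ := fun i => ∑ j ∈ Icc 1 a, Polynomial.C (q j i) * L i ^ (a - j)
  have hLev : ∀ i t, (L i).eval t = t + N * i := by intro i t; simp [L]
  have hpoly : ∑ i ∈ range (m + 1), T i * ∏ i' ∈ (range (m + 1)).erase i, L i' ^ a = 0 := by
    apply Polynomial.eq_zero_of_infinite_isRoot
    have hfin : (((range (m + 1)).image fun i : ℕ => -(N * i : ℚ) : Finset ℚ) : Set ℚ).Finite :=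
      Finset.finite_toSet _
    refine Set.Infinite.mono ?_ hfin.infinite_compl
    intro t ht
    have ht' : ∀ i ∈ range (m + 1), t + N * i ≠ 0 := by
      intro i hi h0
      apply ht
      rw [mem_coe, mem_image]
      exact ⟨i, hi, by linarith⟩
    have h1 := h ⟨t, ht'⟩
    simp only at h1
    show Polynomial.eval t _ = 0
    rw [Polynomial.eval_finsetSum]
    have h2 : ∀ i ∈ range (m + 1), (T i * ∏ i' ∈ (range (m + 1)).erase i, L i' ^ a).eval t
        = (∏ i' ∈ range (m + 1), (t + N * i') ^ a) *
          ∑ j ∈ Icc 1 a, q j i / (t + N * i) ^ j := by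
      intro i hi
      rw [← mul_prod_erase _ _ hi, Polynomial.eval_mul, Polynomial.eval_prod]
      simp only [Polynomial.eval_pow, hLev]
      rw [mul_right_comm, mul_sum, Polynomial.eval_finsetSum]
      congr 1
      refine sum_congr rfl fun j hj => ?_
      have hi' := ht' i hi
      have hj' := (mem_Icc.1 hj).2
      rw [Polynomial.eval_mul, Polynomial.eval_C, Polynomial.eval_pow, hLev,
        pow_sub₀ _ hi' hj']
      field_simp
    rw [sum_congr rfl h2, ← mul_sum, h1, mul_zero]
  have hcop : ∀ i ∈ (range (m + 1)).erase h0, IsCoprime (L h0 ^ a) (L i ^ a) := by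
    intro i hi
    apply IsCoprime.pow
    have hne := ne_of_mem_erase hi
    have := Polynomial.isCoprime_X_sub_C_of_isUnit_sub (R := ℚ) (a := -(N * h0)) (b := -(N * i))
      (by
        rw [isUnit_iff_ne_zero]
        intro h
        apply hne
        have : (N : ℚ) * i = N * h0 := by linarith
        exact_mod_cast mul_left_cancel₀ hN' this)
    simpa [L] using this
  have hdv : L h0 ^ a ∣ T h0 * ∏ i' ∈ (range (m + 1)).erase h0, L i' ^ a := by
    rw [← add_sum_erase _ _ hh0] at hpoly
    rw [eq_neg_of_add_eq_zero_left hpoly, dvd_neg]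
    refine dvd_sum fun i hi => Dvd.dvd.mul_left ?_ _
    exact dvd_prod_of_mem (fun i => L i ^ a) (mem_erase.2 ⟨(ne_of_mem_erase hi).symm, hh0⟩)
  have hdv2 : L h0 ^ a ∣ T h0 := (IsCoprime.prod_right hcop).dvd_of_dvd_mul_right hdv
  obtain ⟨Y, hY⟩ := hdv2
  have hsh := congrArg (fun f => Polynomial.comp f (Polynomial.X - Polynomial.C (N * h0 : ℚ))) hY
  have hLc : (L h0).comp (Polynomial.X - Polynomial.C (N * h0 : ℚ)) = Polynomial.X := by simp [L]
  simp only [T, Polynomial.mul_comp, Polynomial.pow_comp, hLc, Polynomial.sum_comp,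
    Polynomial.C_comp] at hsh
  intro j hj
  have hj' := mem_Icc.1 hj
  have hco := congrArg (fun f => Polynomial.coeff f (a - j)) hsh
  simp only [Polynomial.finsetSum_coeff, Polynomial.coeff_C_mul, Polynomial.coeff_X_pow] at hco
  rw [Polynomial.coeff_X_pow_mul', if_neg (by omega), sum_eq_single j] at hco
  · simpa using hco
  · intro j' hj' hne
    have := mem_Icc.1 hj'
    rw [if_neg (by omega), mul_zero]
  · intro h; exact absurd hj h

lemma dvd_dlcm {k n : ℕ} (hk : k ∈ Icc 1 n) : k ∣ dlcm n := Finset.dvd_lcm (f := id) hk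

lemma dlcm_ne (n : ℕ) : dlcm n ≠ 0 := by
  unfold dlcm
  rw [Ne, Finset.lcm_eq_zero_iff]
  simp

lemma deltan_eq (a N n : ℕ) :
    (deltan a N n : ℚ) = (dlcm n : ℚ) ^ a * N ^ (a * (n / N + 1)) := by
  unfold deltan
  push_cast
  rw [mul_pow, mul_add, pow_add, mul_one]
  ring

lemma p_int {a r N n : ℕ} (hN : 0 < N) (hra : 2 * r * N < a) (hNn : N ∣ n) {p : ℕ → ℕ → ℚ}
    (hp : IsPartialFractionCoeffs a r N n p) :
    ∃ c : ℕ → ℕ → ℤ, ∀ h ∈ range (n / N + 1), ∀ j ∈ Icc 1 a,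
      (deltan a N n : ℚ) * p j h = c j h * (dlcm n * N) ^ j := by
  have hm := Frat_mem (r := r) (D := dlcm n) hN hra hNn (by
    intro k hk
    rw [mem_Icc] at hk
    exact dvd_dlcm (mem_Icc.2 ⟨hk.1, hk.2.trans (Nat.div_le_self _ _)⟩))
  obtain ⟨c, hc⟩ := Msub_repr hm
  refine ⟨c, ?_⟩
  have := pf_unique (a := a) (m := n / N) hN
    (fun j h => (deltan a N n : ℚ) * p j h - c j h * (dlcm n * N) ^ j) (by
      intro t
      have h1 := congrFun hc t
      rw [hp t.1 t.2, ← deltan_eq] at h1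
      rw [← sub_eq_zero] at h1
      refine Eq.trans ?_ h1
      rw [mul_sum, Finset.sum_apply, ← sum_sub_distrib]
      refine sum_congr rfl fun h hh => ?_
      rw [mul_sum, Finset.sum_apply, ← sum_sub_distrib]
      refine sum_congr rfl fun j hj => ?_
      simp only [Pi.smul_apply, Pi.pow_apply, xf, zsmul_eq_mul, div_pow]
      ring)
  intro h hh j hj
  exact sub_eq_zero.1 (this h hh j hj)

lemma deltan_ne {a N n : ℕ} (hN : 0 < N) : (deltan a N n : ℚ) ≠ 0 := by
  have := dlcm_ne n
  unfold deltan
  have h2 := hN.ne'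
  exact_mod_cast (mul_ne_zero (pow_ne_zero _ (mul_ne_zero h2 this)) (pow_ne_zero _ h2))

lemma term_int {n N : ℕ} {c : ℤ} {d x : ℚ} {j : ℕ} (k : ℕ) (hk : k ∈ Icc 1 n) (hx : x = k) {y : ℚ}
    (h : d * y = c * (dlcm n * N) ^ j) : ∃ b : ℤ, d * (y / x ^ j) = b := by
  obtain ⟨e, he⟩ := dvd_dlcm hk
  have hk0 : (k : ℚ) ≠ 0 := by
    have := (mem_Icc.1 hk).1
    exact_mod_cast (by omega : k ≠ 0)
  refine ⟨c * (e * N) ^ j, ?_⟩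
  rw [mul_div_assoc', h, hx, he]
  push_cast
  rw [mul_assoc (k : ℚ), mul_pow (k : ℚ)]
  field_simp

lemma sum_int {α : Type*} (s : Finset α) (f : α → ℚ) (h : ∀ i ∈ s, ∃ b : ℤ, f i = b) :
    ∃ b : ℤ, ∑ i ∈ s, f i = b := by
  choose! b hb using h
  exact ⟨∑ i ∈ s, b i, by rw [sum_congr rfl hb]; push_cast; rfl⟩

lemma poly_int {δ : ℚ} (hδ : δ ≠ 0) {P : Polynomial ℚ} (h : ∀ i, ∃ b : ℤ, δ * P.coeff i = b) :
    ∃ B : Polynomial ℤ, P = Polynomial.C δ⁻¹ * im B := by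
  obtain ⟨B, hB⟩ := im_of_coeff (H := Polynomial.C δ * P) (by simpa using h)
  refine ⟨B, ?_⟩
  rw [← hB, ← mul_assoc, ← Polynomial.C_mul, inv_mul_cancel₀ hδ]
  simp

lemma U_int {a r N n : ℕ} (hN : 0 < N) (hra : 2 * r * N < a) (hNn : N ∣ n) {p : ℕ → ℕ → ℚ}
    (hp : IsPartialFractionCoeffs a r N n p) :
    ∃ B : Polynomial ℤ, Upoly a N n p = Polynomial.C ((deltan a N n : ℚ))⁻¹ * im B := by
  obtain ⟨c, hc⟩ := p_int hN hra hNn hp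
  apply poly_int (deltan_ne hN)
  intro i
  simp only [Upoly, Polynomial.coeff_neg, Polynomial.finsetSum_coeff, Polynomial.coeff_C_mul,
    Polynomial.coeff_X_pow, mul_neg, ← sum_neg_distrib, mul_sum]
  apply sum_int
  intro t ht
  split_ifs
  · simp only [mul_one, mul_sum, ← sum_neg_distrib]
    apply sum_int
    intro j hj
    apply sum_int
    intro h hh
    rw [mem_Icc] at ht
    rw [mem_range] at hh
    have h1 : N * h < t := by
      have h2 : h ≤ (t - 1) / N := by omega
      have := (Nat.le_div_iff_mul_le hN).1 h2
      rw [mul_comm] at this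
      omega
    have h2 : h ∈ range (n / N + 1) := by
      rw [mem_range, Nat.lt_succ_iff, Nat.le_div_iff_mul_le hN, mul_comm]
      omega
    obtain ⟨b, hb⟩ := term_int (t - N * h) (mem_Icc.2 ⟨by omega, by omega⟩)
      (x := (t : ℚ) - N * h) (by rw [Nat.cast_sub h1.le]; push_cast; rfl) (hc h h2 j hj)
    exact ⟨-b, by rw [hb]; push_cast; rfl⟩
  · exact ⟨0, by simp⟩

lemma V_int {a r N n : ℕ} (hN : 0 < N) (hra : 2 * r * N < a) (hNn : N ∣ n) {p : ℕ → ℕ → ℚ}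
    (hp : IsPartialFractionCoeffs a r N n p) :
    ∃ B : Polynomial ℤ, Vpoly a N n p = Polynomial.C ((deltan a N n : ℚ))⁻¹ * im B := by
  obtain ⟨c, hc⟩ := p_int hN hra hNn hp
  apply poly_int (deltan_ne hN)
  intro i
  simp only [Vpoly, Polynomial.coeff_neg, Polynomial.finsetSum_coeff, Polynomial.coeff_C_mul,
    Polynomial.coeff_X_pow, mul_neg, ← sum_neg_distrib, mul_sum]
  apply sum_int
  intro t ht
  split_ifs
  · simp only [mul_one, mul_sum, ← sum_neg_distrib]
    apply sum_int
    intro j hj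
    apply sum_int
    intro h hh
    rw [mem_range] at ht
    rw [mem_Icc] at hh
    have h1 : t < N * h := by
      have h3 := (Nat.div_lt_iff_lt_mul hN).1 (Nat.lt_succ_of_le hh.1)
      rw [Nat.succ_mul, mul_comm] at h3
      omega
    have h2 : h ∈ range (n / N + 1) := by
      rw [mem_range]; omega
    have h4 : N * h ≤ n := by
      have := (Nat.le_div_iff_mul_le hN).1 hh.2
      rwa [mul_comm] at this
    obtain ⟨b, hb⟩ := term_int (N * h - t) (mem_Icc.2 ⟨by omega, by omega⟩)
      (x := (N * h : ℚ) - t) (by rw [Nat.cast_sub h1.le]; push_cast; rfl) (hc h h2 j hj)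
    exact ⟨-b, by rw [hb]; push_cast; rfl⟩
  · exact ⟨0, by simp⟩

lemma P_int {a r N n : ℕ} (hN : 0 < N) (hra : 2 * r * N < a) (hNn : N ∣ n) {p : ℕ → ℕ → ℚ}
    (hp : IsPartialFractionCoeffs a r N n p) (j : ℕ) :
    ∃ B : Polynomial ℤ, Ppoly a N n p j
      = Polynomial.C ((deltan a N n : ℚ))⁻¹ * im (Polynomial.expand ℤ N B) := by
  obtain ⟨c, hc⟩ := p_int hN hra hNn hp
  have hδ := deltan_ne (a := a) (n := n) hN
  unfold Ppoly
  split_ifs with hj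
  · refine ⟨∑ h ∈ range (n / N + 1),
      Polynomial.C (c j h * (dlcm n * N) ^ j) * Polynomial.X ^ h, ?_⟩
    simp only [map_sum, im, Polynomial.map_sum, mul_sum]
    refine sum_congr rfl fun h hh => ?_
    have h1 := hc h hh j (mem_Icc.2 hj)
    have h2 : p j h = (deltan a N n : ℚ)⁻¹ * (c j h * (dlcm n * N) ^ j) := by
      rw [← h1, inv_mul_cancel_left₀ hδ]
    rw [h2, map_mul (Polynomial.expand ℤ N), map_pow (Polynomial.expand ℤ N), Polynomial.expand_C,
      Polynomial.expand_X, Polynomial.map_mul,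
      Polynomial.map_pow, Polynomial.map_pow, Polynomial.map_C, Polynomial.map_X, ← pow_mul,
      Polynomial.C_mul, mul_assoc]
    simp
  · exact ⟨0, by simp [im]⟩

end ArithPart

/-- Let `a, r, N, n` be positive integers with `2rN < a` and `N ∣ n`, let
`z₀ ∈ {1, e^{iπ/N}}` and `p ∈ {0,1}`, set `d₀ = a(n/N+1) - 2rn`, and for
`1 ≤ k ≤ d₀-1` let `U_{k,λ}, V_{k,λ} ∈ ℚ[z^N, z^{-N}]` be the components of the
decompositions `z^{k-1}U_k(z) = ∑_{λ<N} z^λ U_{k,λ}(z)`,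
`z^{k-1}V_k(z) = ∑_{λ<N} z^λ V_{k,λ}(z)`. Define `s_{k,i} = δ_n z₀^{k-1} P_{k,i}(z₀)`
for `1 ≤ i ≤ a` and `s_{k,a+1+λ} = δ_n (U_{k,λ}(z₀) + (-1)^p V_{k,N-λ}(z₀))` for
`0 ≤ λ ≤ N-1` (with `V_{k,N} = V_{k,0}`). Then every `s_{k,i}` is a rational integer. -/
theorem linear_form_coefficients_are_integers
    (a r N n : ℕ) (ha : 0 < a) (hr : 0 < r) (hN : 0 < N) (hn : 0 < n)
    (hra : 2 * r * N < a) (hNn : N ∣ n)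
    (z₀ : ℂ) (hz₀ : z₀ = 1 ∨ z₀ = Complex.exp (Real.pi * Complex.I / N))
    (pp : ℕ) (hpp : pp = 0 ∨ pp = 1)
    (p : ℕ → ℕ → ℚ) (hp : IsPartialFractionCoeffs a r N n p)
    (Uc Vc : ℕ → ℕ → RatFunc ℚ)
    (hUc : ∀ k : ℕ, 1 ≤ k → k + 1 ≤ a * (n / N + 1) - 2 * r * n →
      RatFunc.X ^ (k - 1) * UkF a N n p (k - 1)
        = ∑ l ∈ Finset.range N, RatFunc.X ^ l * Uc k l ∧
      ∀ l ∈ Finset.range N, InLaurentN N (Uc k l))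
    (hVc : ∀ k : ℕ, 1 ≤ k → k + 1 ≤ a * (n / N + 1) - 2 * r * n →
      RatFunc.X ^ (k - 1) * VkF a N n p (k - 1)
        = ∑ l ∈ Finset.range N, RatFunc.X ^ l * Vc k l ∧
      ∀ l ∈ Finset.range N, InLaurentN N (Vc k l))
    (s : ℕ → ℕ → ℂ)
    (hs1 : ∀ k i : ℕ, 1 ≤ i → i ≤ a →
      s k i = (deltan a N n : ℂ) * z₀ ^ (k - 1) *
        RatFunc.eval (algebraMap ℚ ℂ) z₀ (PPk a N n p (k - 1) i))
    (hs2 : ∀ k l : ℕ, l < N →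
      s k (a + 1 + l) = (deltan a N n : ℂ) *
        (RatFunc.eval (algebraMap ℚ ℂ) z₀ (Uc k l) +
          (-1) ^ pp * RatFunc.eval (algebraMap ℚ ℂ) z₀ (Vc k ((N - l) % N)))) :
    ∀ k : ℕ, 1 ≤ k → k + 1 ≤ a * (n / N + 1) - 2 * r * n →
      ∀ i ∈ Finset.Icc 1 (a + N), ∃ m : ℤ, s k i = (m : ℂ) := by
  have hδ := deltan_ne (a := a) (n := n) hN
  have hP := P_int hN hra hNn hp
  have hU := U_int hN hra hNn hp
  have hV := V_int hN hra hNn hp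
  have hz0 : z₀ ≠ 0 := by
    rcases hz₀ with rfl | rfl
    · exact one_ne_zero
    · exact Complex.exp_ne_zero _
  obtain ⟨ε, hε, hz⟩ : ∃ ε : ℤ, ε * ε = 1 ∧ z₀ ^ N = ε := by
    rcases hz₀ with rfl | rfl
    · exact ⟨1, by norm_num, by simp⟩
    · refine ⟨-1, by norm_num, ?_⟩
      rw [← Complex.exp_nat_mul, mul_div_cancel₀ _ (by exact_mod_cast hN.ne'), Complex.exp_pi_mul_I]
      simp
  intro k hk hk' i hi
  rw [Finset.mem_Icc] at hi
  by_cases hia : i ≤ a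
  · obtain ⟨B, hB⟩ := PPk_form hN hP (k - 1) i
    refine ⟨B.eval ε, ?_⟩
    rw [hs1 k i hi.1 hia, ← eval_int hδ hB hz0 hz]
    push_cast
    rfl
  · obtain ⟨l, rfl⟩ : ∃ l, i = a + 1 + l := ⟨i - a - 1, by omega⟩
    have hl : l < N := by omega
    rw [hs2 k l hl]
    obtain ⟨hU1, hU2⟩ := hUc k hk hk'
    obtain ⟨hV1, hV2⟩ := hVc k hk hk'
    obtain ⟨M, hM⟩ := comps hN hδ (UkF_Z hP hU (k - 1)) (Uc k) (k - 1) hU1 hU2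
    obtain ⟨M', hM'⟩ := comps hN hδ (VkF_Z hP hV (k - 1)) (Vc k) (k - 1) hV1 hV2
    obtain ⟨B, hB⟩ := hM l (Finset.mem_range.2 hl)
    obtain ⟨B', hB'⟩ := hM' ((N - l) % N) (Finset.mem_range.2 (Nat.mod_lt _ hN))
    obtain ⟨x, hx⟩ := eval_int' hδ hB hz0 hz hε
    obtain ⟨y, hy⟩ := eval_int' hδ hB' hz0 hz hε
    refine ⟨x + (-1) ^ pp * y, ?_⟩
    push_cast at hx hy ⊢
    rw [← hx, ← hy]
    ring
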